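/- Let $R_d > 0$ and $0 < R_g < x_Q < 2 R_d$. Then $\int_{R_g}^{x_Q} \frac{2r}{x_Q^2 - R_g^2}\left[2\pi R_d^2 - 2 R_d^2 \arccos\left(\frac{r}{2R_d}\right) + r\sqrt{R_d^2 - \frac{r^2}{4}}\right] dr = F_1(x_Q)$, where $F_1(x_Q) = \frac{1}{4(x_Q^2 - R_g^2)}\Big\{ x_Q\sqrt{4R_d^2 - x_Q^2}\,(2R_d^2 + x_Q^2) + 8\pi R_d^2 x_Q^2 + 8R_d^2\left[R_g^2 \arccos\left(\frac{R_g}{2R_d}\right) - x_Q^2 \arccos\left(\frac{x_Q}{2R_d}\right)\right] + 8R_d^4\left[2\arcsin\left(\frac{R_g}{2R_d}\right) + \arctan\left(\frac{x_Q}{\sqrt{4R_d^2 - x_Q^2}}\right) - \arctan\left(\frac{R_g}{\sqrt{4R_d^2 - R_g^2}}\right) - 2\arcsin\left(\frac{x_Q}{2R_d}\right)\right] - R_g\sqrt{4R_d^2 - R_g^2}\,(2R_d^2 + R_g^2) - 8\pi R_d^2 R_g^2 \Big\}$. (Here $\operatorname{arccot}(z)$ for $z > 0$ has been written as $\arctan(1/z)$.)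 -/

import Mathlib

open MeasureTheory intervalIntegral Real

/-!
In the variable `t = r / (2 * R)` the union area of two discs of radius `R` at distance `r` is
`R ^ 2` times a function of `t` alone, so only one integral has to be evaluated. Integrating its
summand `t * arccos t` by parts reduces it to `t ^ 2 / √(1 - t ^ 2)` and `t ^ 2 * √(1 - t ^ 2)`,
whose primitives combine `arcsin t` with `√(1 - t ^ 2)` times a polynomial. The inverse tangents of
the closed form are inverse sines in disguise: `arctan (r / √(4 * R ^ 2 - r ^ 2)) = arcsin t`.
-/

theorem sqrt_one_sub_div_sq {c : ℝ} (hc : 0 < c) (r : ℝ) :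
    √(1 - (r / c) ^ 2) = √(c ^ 2 - r ^ 2) / c := by
  have hscale : 1 - (r / c) ^ 2 = (c ^ 2 - r ^ 2) / c ^ 2 := by
    field_simp
  rw [hscale, sqrt_div' _ (sq_nonneg c), sqrt_sq hc.le]

theorem arctan_div_sqrt_sq_sub_sq {c r : ℝ} (hr : r ∈ Set.Ioo (-c) c) :
    arctan (r / √(c ^ 2 - r ^ 2)) = arcsin (r / c) := by
  have hc : 0 < c := by linarith [hr.1, hr.2]
  have hrc : r / c ∈ Set.Ioo (-1) 1 :=
    ⟨by rw [lt_div_iff₀ hc]; linarith [hr.1], (div_lt_one hc).2 hr.2⟩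
  rw [arcsin_eq_arctan hrc, sqrt_one_sub_div_sq hc, div_div_div_cancel_right₀ hc.ne']

theorem hasDerivAt_mul_sqrt_one_sub_sq {t : ℝ} (ht : t ∈ Set.Ioo (-1) 1) :
    HasDerivAt (fun t ↦ t * √(1 - t ^ 2)) ((1 - 2 * t ^ 2) / √(1 - t ^ 2)) t := by
  have hpos : 0 < 1 - t ^ 2 := by nlinarith [ht.1, ht.2]
  have hsqrt : HasDerivAt (fun t ↦ √(1 - t ^ 2)) (-(2 * t) / (2 * √(1 - t ^ 2))) t := by
    simpa using ((hasDerivAt_pow 2 t).const_sub 1).sqrt hpos.ne'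
  refine ((hasDerivAt_id' t).mul hsqrt).congr_deriv ?_
  have := sqrt_pos.2 hpos
  field_simp
  linear_combination sq_sqrt hpos.le

/-- The area of the union of two discs of radius `1` whose centres are at distance `2 * t`,
for `0 ≤ t ≤ 1`. -/
noncomputable def unitUnionArea (t : ℝ) : ℝ :=
  2 * π - 2 * arccos t + 2 * (t * √(1 - t ^ 2))

/-- The primitive of `t * unitUnionArea t` on `[-1, 1]` that vanishes at `0`. -/
noncomputable def unitUnionAreaMoment (t : ℝ) : ℝ :=
  π * t ^ 2 - t ^ 2 * arccos t - arcsin t / 4 + t * √(1 - t ^ 2) * (1 + 2 * t ^ 2) / 4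

theorem continuous_unitUnionArea : Continuous unitUnionArea := by
  unfold unitUnionArea
  fun_prop

theorem continuous_unitUnionAreaMoment : Continuous unitUnionAreaMoment := by
  unfold unitUnionAreaMoment
  fun_prop

theorem hasDerivAt_unitUnionAreaMoment {t : ℝ} (ht : t ∈ Set.Ioo (-1) 1) :
    HasDerivAt unitUnionAreaMoment (t * unitUnionArea t) t := by
  have hpos : 0 < 1 - t ^ 2 := by nlinarith [ht.1, ht.2]
  have hsq : HasDerivAt (fun t : ℝ ↦ t ^ 2) (2 * t) t := by simpa using hasDerivAt_pow 2 t
  have harccos := hsq.mul (hasDerivAt_arccos ht.1.ne' ht.2.ne)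
  have harcsin := (hasDerivAt_arcsin ht.1.ne' ht.2.ne).div_const 4
  have hpoly := ((hasDerivAt_mul_sqrt_one_sub_sq ht).mul
    ((hsq.const_mul 2).const_add 1)).div_const 4
  refine ((((hsq.const_mul π).sub harccos).sub harcsin).add hpoly).congr_deriv ?_
  have := sqrt_pos.2 hpos
  unfold unitUnionArea
  field_simp
  linear_combination (-4 * t ^ 2) * sq_sqrt hpos.le

theorem integral_mul_unitUnionArea {a b : ℝ} (ha : a ∈ Set.Icc (-1) 1) (hb : b ∈ Set.Icc (-1) 1) :
    ∫ t in a..b, t * unitUnionArea t = unitUnionAreaMoment b - unitUnionAreaMoment a := by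
  refine integral_eq_sub_of_hasDeriv_right continuous_unitUnionAreaMoment.continuousOn
    (fun t ht ↦ (hasDerivAt_unitUnionAreaMoment ?_).hasDerivWithinAt)
    ((continuous_id.mul continuous_unitUnionArea).intervalIntegrable a b)
  exact ⟨(le_min ha.1 hb.1).trans_lt ht.1, ht.2.trans_le (max_le ha.2 hb.2)⟩

/-- The area of the union of two discs of radius `R` whose centres are at distance `r`, for
`0 ≤ r ≤ 2 * R`; this is `S_{u1}(r)` with `R = R_d`. -/
noncomputable def unionArea (R r : ℝ) : ℝ :=
  2 * π * R ^ 2 - 2 * R ^ 2 * arccos (r / (2 * R)) + r * √(R ^ 2 - r ^ 2 / 4)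

theorem unionArea_eq_sq_mul_unitUnionArea {R : ℝ} (hR : 0 < R) (r : ℝ) :
    unionArea R r = R ^ 2 * unitUnionArea (r / (2 * R)) := by
  have hsqrt : √(R ^ 2 - r ^ 2 / 4) = R * √(1 - (r / (2 * R)) ^ 2) := by
    rw [← sqrt_sq hR.le, ← sqrt_mul (sq_nonneg R), sqrt_sq hR.le]
    congr 1
    field_simp
    ring
  rw [unionArea, unitUnionArea, hsqrt]
  field_simp

theorem integral_mul_unionArea {R a b : ℝ} (hR : 0 < R)
    (ha : a ∈ Set.Icc (-(2 * R)) (2 * R)) (hb : b ∈ Set.Icc (-(2 * R)) (2 * R)) :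
    ∫ r in a..b, r * unionArea R r =
      4 * R ^ 4 * (unitUnionAreaMoment (b / (2 * R)) - unitUnionAreaMoment (a / (2 * R))) := by
  have hdiv {r : ℝ} (hr : r ∈ Set.Icc (-(2 * R)) (2 * R)) : r / (2 * R) ∈ Set.Icc (-1) 1 :=
    ⟨by rw [le_div_iff₀ (by positivity)]; linarith [hr.1], div_le_one_of_le₀ hr.2 (by positivity)⟩
  have hscale (r : ℝ) :
      r * unionArea R r = 2 * R ^ 3 * (r / (2 * R) * unitUnionArea (r / (2 * R))) := by
    rw [unionArea_eq_sq_mul_unitUnionArea hR]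
    field_simp
  calc ∫ r in a..b, r * unionArea R r
      = 2 * R ^ 3 * ∫ r in a..b, r / (2 * R) * unitUnionArea (r / (2 * R)) := by
        simp_rw [hscale, intervalIntegral.integral_const_mul]
    _ = 2 * R ^ 3 * (2 * R * ∫ t in a / (2 * R)..b / (2 * R), t * unitUnionArea t) := by
        rw [integral_comp_div (fun t ↦ t * unitUnionArea t) (by positivity), smul_eq_mul]
    _ = _ := by
        rw [integral_mul_unitUnionArea (hdiv ha) (hdiv hb)]
        ring

theorem unitUnionAreaMoment_div_two_mul {R : ℝ} (hR : 0 < R) (r : ℝ) :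
    32 * R ^ 4 * unitUnionAreaMoment (r / (2 * R)) =
      r * √(4 * R ^ 2 - r ^ 2) * (2 * R ^ 2 + r ^ 2) + 8 * π * R ^ 2 * r ^ 2
        - 8 * R ^ 2 * (r ^ 2 * arccos (r / (2 * R))) - 8 * R ^ 4 * arcsin (r / (2 * R)) := by
  have hsqrt : √(1 - (r / (2 * R)) ^ 2) = √(4 * R ^ 2 - r ^ 2) / (2 * R) := by
    rw [sqrt_one_sub_div_sq (by positivity), mul_pow]
    norm_num
  rw [unitUnionAreaMoment, hsqrt]
  field_simp
  ring

/-- For `Rg < xQ < 2 R_d`, the expected union sensing area of an S-C pair equals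
`F₁(xQ)` as given in the paper (with `arccot z` written as `arctan (1/z)`). -/
theorem expected_union_area_F1 (Rd Rg xQ : ℝ) (hRd : 0 < Rd) (hRg : 0 < Rg)
    (hlt : Rg < xQ) (hxQ : xQ < 2 * Rd) :
    ∫ r in Rg..xQ,
        (2 * r / (xQ ^ 2 - Rg ^ 2)) *
          (2 * Real.pi * Rd ^ 2 - 2 * Rd ^ 2 * Real.arccos (r / (2 * Rd)) +
            r * Real.sqrt (Rd ^ 2 - r ^ 2 / 4))
      = (1 / (4 * (xQ ^ 2 - Rg ^ 2))) *
          (xQ * Real.sqrt (4 * Rd ^ 2 - xQ ^ 2) * (2 * Rd ^ 2 + xQ ^ 2)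
            + 8 * Real.pi * Rd ^ 2 * xQ ^ 2
            + 8 * Rd ^ 2 *
                (Rg ^ 2 * Real.arccos (Rg / (2 * Rd))
                  - xQ ^ 2 * Real.arccos (xQ / (2 * Rd)))
            + 8 * Rd ^ 4 *
                (2 * Real.arcsin (Rg / (2 * Rd))
                  + Real.arctan (xQ / Real.sqrt (4 * Rd ^ 2 - xQ ^ 2))
                  - Real.arctan (Rg / Real.sqrt (4 * Rd ^ 2 - Rg ^ 2))
                  - 2 * Real.arcsin (xQ / (2 * Rd)))
            - Rg * Real.sqrt (4 * Rd ^ 2 - Rg ^ 2) * (2 * Rd ^ 2 + Rg ^ 2)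
            - 8 * Real.pi * Rd ^ 2 * Rg ^ 2) := by
  have hRg_mem : Rg ∈ Set.Ioo (-(2 * Rd)) (2 * Rd) := ⟨by linarith, by linarith⟩
  have hxQ_mem : xQ ∈ Set.Ioo (-(2 * Rd)) (2 * Rd) := ⟨by linarith, hxQ⟩
  have harctan {r : ℝ} (hr : r ∈ Set.Ioo (-(2 * Rd)) (2 * Rd)) :
      arctan (r / √(4 * Rd ^ 2 - r ^ 2)) = arcsin (r / (2 * Rd)) := by
    rw [← arctan_div_sqrt_sq_sub_sq hr, mul_pow]
    norm_num
  calc _ = ∫ r in Rg..xQ, 2 / (xQ ^ 2 - Rg ^ 2) * (r * unionArea Rd r) :=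
        integral_congr fun r _ ↦ by simp only [unionArea]; ring
    _ = 1 / (4 * (xQ ^ 2 - Rg ^ 2)) * (32 * Rd ^ 4 * unitUnionAreaMoment (xQ / (2 * Rd))
          - 32 * Rd ^ 4 * unitUnionAreaMoment (Rg / (2 * Rd))) := by
        rw [intervalIntegral.integral_const_mul, integral_mul_unionArea hRd
          (Set.Ioo_subset_Icc_self hRg_mem) (Set.Ioo_subset_Icc_self hxQ_mem),
          one_div, mul_inv]
        ring
    _ = _ := by
        rw [unitUnionAreaMoment_div_two_mul hRd, unitUnionAreaMoment_div_two_mul hRd,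
          harctan hRg_mem, harctan hxQ_mem]
        ring
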